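/- arXiv:2601.07642 — 8 statements merged into one kernel-verified Lean document; each statement's English description precedes it below -/
import Mathlib

section
/- The set P' = {(1/μ, μ − k/r) ∈ ℝ₊² : (μ,r,k) admissible} equals the set P = {(1/μ, p/r) ∈ ℝ₊² : μ, ν, r are positive integers with r ≥ 2, j ∈ {1,…,r−1}, p = rν + j, q = rμ, gcd(p,q) = 1, and q − μ + 1 < p < q}. -/
/-!
The two parametrisations correspond under `k = q - p = r * μ - p`, which gives `p / r = μ - k / r`.
The bounds `q - μ + 1 < p < q` say exactly `1 ≤ k ≤ μ - 2`, and `gcd(p, q) = gcd(k, r * μ)` is `1`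
if and only if `k` is coprime to both `r` and `μ`. Given `k`, the numbers `ν` and `j` are the
quotient and remainder of `p` by `r`; the remainder is nonzero because `gcd(k, r) = 1` and `r ≥ 2`.
-/

open MeasureTheory Real
open scoped ENNReal NNReal

/-- Cardinal B-splines: `bspline 1 = χ_{[0,1]}`, `bspline (n+1) = bspline n ∗ bspline 1`. -/
noncomputable def bspline : ℕ → ℝ → ℝ
  | 0 => fun _ => 0
  | 1 => Set.indicator (Set.Icc (0:ℝ) 1) (fun _ => 1)
  | (n+2) => MeasureTheory.convolution (bspline (n+1)) (bspline 1)
      (ContinuousLinearMap.lsmul ℝ ℝ) MeasureTheory.volume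

/-- Admissible parameter triples. -/
def Admissible (μ r k : ℕ) : Prop :=
  3 ≤ μ ∧ 2 ≤ r ∧ 1 ≤ k ∧ k ≤ μ - 2 ∧ Nat.gcd k μ = 1 ∧ Nat.gcd k r = 1

/-- Signed fractional part `⟨x⟩ = x - round x ∈ (-1/2, 1/2]`. -/
noncomputable def sfrac (x : ℝ) : ℝ := x - round x

/-- Zak transform of a function `f : ℝ → ℝ`. -/
noncomputable def zak (lam : ℝ) (f : ℝ → ℝ) (x γ : ℝ) : ℂ :=
  (Real.sqrt lam : ℂ) *
    ∑' k : ℤ, (f (lam * (x - k)) : ℂ) * Complex.exp (2 * Real.pi * Complex.I * k * γ)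

/-- The Gabor atom `e^{2πibm·} g(· - ak)`. -/
noncomputable def gaborAtom (g : ℝ → ℂ) (a b : ℝ) (k m : ℤ) : ℝ → ℂ :=
  fun x => Complex.exp (2 * Real.pi * Complex.I * b * m * x) * g (x - a * k)

/-- The Gabor system `G(g,a,b)` is a frame for `L²(ℝ)`. -/
def IsGaborFrame (g : ℝ → ℂ) (a b : ℝ) : Prop :=
  ∃ A B : ℝ, 0 < A ∧ 0 < B ∧
    ∀ f : Lp ℂ 2 (volume : Measure ℝ),
      ENNReal.ofReal (A * ‖f‖ ^ 2) ≤
          (∑' km : ℤ × ℤ,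
            (‖∫ x : ℝ, f x * (starRingEnd ℂ) (gaborAtom g a b km.1 km.2 x)‖₊ ^ 2 : ℝ≥0∞)) ∧
        (∑' km : ℤ × ℤ,
            (‖∫ x : ℝ, f x * (starRingEnd ℂ) (gaborAtom g a b km.1 km.2 x)‖₊ ^ 2 : ℝ≥0∞)) ≤
          ENNReal.ofReal (B * ‖f‖ ^ 2)

/-- The set P' parameterized by admissible triples. -/
def PsetPrime : Set (ℝ × ℝ) :=
  {x | ∃ μ r k : ℕ, Admissible μ r k ∧ x = (1/(μ:ℝ), (μ:ℝ) - (k:ℝ)/(r:ℝ))}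

/-- The set P of Gröchenig's point obstructions. -/
def PsetOrig : Set (ℝ × ℝ) :=
  {x | ∃ μ ν r j p q : ℕ, 0 < μ ∧ 0 < ν ∧ 2 ≤ r ∧ 1 ≤ j ∧ j ≤ r - 1 ∧
    p = r * ν + j ∧ q = r * μ ∧ Nat.gcd p q = 1 ∧
    (q:ℤ) - μ + 1 < (p:ℤ) ∧ p < q ∧ x = (1/(μ:ℝ), (p:ℝ)/(r:ℝ))}

/-- P' = P. -/
theorem stmt_1 : PsetPrime = PsetOrig := by
  ext x
  constructor
  · rintro ⟨μ, r, k, ⟨hμ, hr, hk1, hk2, hkμ, hkr⟩, rfl⟩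
    -- The complement of `k` in `q` is the numerator `p`.
    obtain ⟨p, hp⟩ : ∃ p, p + k = r * μ := ⟨r * μ - k, Nat.sub_add_cancel (by nlinarith [show k ≤ μ by omega])⟩
    have hk : k + 2 ≤ μ := by omega
    have hrp : r ≤ p := by nlinarith
    have hcop : Nat.Coprime k (r * μ) := Nat.Coprime.mul_right hkr hkμ
    -- If `r ∣ p`, then `r ∣ k`, contradicting `gcd(k, r) = 1` since `r ≥ 2`.
    have hj : p % r ≠ 0 := by
      intro h0
      have hdvd : r ∣ k :=
        (Nat.dvd_add_right (Nat.dvd_of_mod_eq_zero h0)).1 (hp ▸ Dvd.intro μ rfl)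
      have := Nat.eq_one_of_dvd_one (hkr ▸ Nat.dvd_gcd hdvd dvd_rfl)
      omega
    have hlt : p % r < r := Nat.mod_lt _ (by omega)
    refine ⟨μ, p / r, r, p % r, p, r * μ, by omega, Nat.div_pos hrp (by omega), hr, by omega,
      by omega, (Nat.div_add_mod p r).symm, rfl, ?_, by omega, by omega, ?_⟩
    · rw [← hp, Nat.gcd_self_add_right]
      rw [← hp] at hcop
      simpa [Nat.coprime_comm] using hcop
    · have hr0 : (r : ℝ) ≠ 0 := by positivity
      have hpR : (p : ℝ) + k = r * μ := by exact_mod_cast hp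
      congr 1
      field_simp
      linarith
  · rintro ⟨μ, ν, r, j, p, q, -, -, hr, -, -, -, rfl, hpq, hlow, hup, rfl⟩
    obtain ⟨k, hk⟩ : ∃ k, p + k = r * μ := ⟨r * μ - p, by omega⟩
    have hcop : Nat.Coprime k (r * μ) := by
      rw [← hk] at hpq ⊢
      simpa [Nat.coprime_comm, Nat.coprime_iff_gcd_eq_one] using hpq
    refine ⟨μ, r, k, ⟨by omega, hr, by omega, by omega, hcop.coprime_mul_left_right,
      hcop.coprime_mul_right_right⟩, ?_⟩
    have hr0 : (r : ℝ) ≠ 0 := by positivity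
    have hkR : (p : ℝ) + k = r * μ := by exact_mod_cast hk
    congr 1
    field_simp
    linarith
end

section
/- The set of values {1 − k/(rμ) : (μ,r,k) admissible} is dense in the open interval (1/2, 1); that is, for every d ∈ (1/2,1) and every ε > 0 there exists an admissible triple (μ,r,k) with |1 − k/(rμ) − d| < ε. -/
/-!
Taking `r = 2` and `μ = 2^(n+1)`, every odd `k` is coprime to both `r` and `μ`, so the only
remaining constraint is `k ≤ μ - 2`. The odd multiples of `1/μ` are `2/μ`-spaced, so one of them
lies within `1/μ` of `2(1-d) ∈ (0,1)`; for large `n` it stays away from `1`, which gives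
`k ≤ μ - 2`, and `1 - k/(2μ)` is then within `1/(2μ) < ε` of `d`.
-/

open MeasureTheory Real
open scoped ENNReal NNReal

/-- the values 1 - k/(rμ) over admissible triples are dense in (1/2, 1). -/
theorem stmt_3 (d : ℝ) (hd : d ∈ Set.Ioo (1/2 : ℝ) 1) (ε : ℝ) (hε : 0 < ε) :
    ∃ μ r k : ℕ, Admissible μ r k ∧ |1 - (k:ℝ)/((r:ℝ) * μ) - d| < ε := by
  obtain ⟨hd1, hd2⟩ := hd
  have hpos : 0 < 2 * d - 1 := by linarith
  obtain ⟨n, hn⟩ := pow_unbounded_of_one_lt (2 / (2 * d - 1) + 1 / ε + 2) (one_lt_two (α := ℝ))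
  have hA : 0 < 2 / (2 * d - 1) := by positivity
  have hE : 0 < 1 / ε := by positivity
  have hN1 : 2 < (2 * d - 1) * 2 ^ n := by
    have h : 2 / (2 * d - 1) < 2 ^ n := by linarith
    rw [div_lt_iff₀ hpos] at h
    linarith
  have hN2 : 1 < ε * 2 ^ n := by
    have h : 1 / ε < 2 ^ n := by linarith
    rw [div_lt_iff₀ hε] at h
    linarith
  have hN3 : (2 : ℝ) < 2 ^ n := by linarith
  -- With `x = 2(1-d)` and `μ = 2^(n+1)`, the odd number `k = 2m+1` is within `1` of `xμ`.
  obtain ⟨m, hm⟩ : ∃ m : ℕ, m = ⌊2 * (1 - d) * (2 : ℝ) ^ n⌋₊ := ⟨_, rfl⟩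
  have hx : 0 ≤ 2 * (1 - d) * (2 : ℝ) ^ n := by
    have : 0 < 1 - d := by linarith
    positivity
  have hm1 : (m : ℝ) ≤ 2 * (1 - d) * 2 ^ n := hm ▸ Nat.floor_le hx
  have hm2 : 2 * (1 - d) * 2 ^ n < (m : ℝ) + 1 := hm ▸ Nat.lt_floor_add_one _
  have hN3' : 2 < 2 ^ n := by exact_mod_cast hN3
  have hmN : m + 2 < 2 ^ n := by
    have : (m : ℝ) + 2 < 2 ^ n := by linarith
    exact_mod_cast this
  have hodd : Nat.Coprime (2 * m + 1) 2 := by simp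
  refine ⟨2 ^ (n + 1), 2, 2 * m + 1, ⟨?_, le_rfl, by omega, ?_, hodd.pow_right _, hodd⟩, ?_⟩
  · rw [pow_succ]; omega
  · rw [pow_succ]; omega
  · have hP : (0 : ℝ) < 2 ^ n := by positivity
    have key : 1 - ((2 * m + 1 : ℕ) : ℝ) / (((2 : ℕ) : ℝ) * ((2 ^ (n + 1) : ℕ) : ℝ)) - d
        = (4 * (1 - d) * 2 ^ n - (2 * m + 1)) / (4 * 2 ^ n) := by
      push_cast
      rw [pow_succ]
      field_simp
      ring
    rw [key, abs_lt]
    constructor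
    · rw [lt_div_iff₀ (by positivity)]
      linarith
    · rw [div_lt_iff₀ (by positivity)]
      linarith
end

section
/- Let (μ,r,k) be an admissible parameter triple, b₀ = μ − k/r, and let N = ⌊b₀⌋, assuming N ≥ 2. Then b₀ − N ≥ (μ − N)/(μ − 1). -/
/-!
Put `m = μ - N` and `j = m r - k`, so that `b₀ - N = j / r`. Since `N ≤ b₀`, `j ≥ 0`, and `j = 0`
would give `r ∣ k`, contradicting `gcd(k, r) = 1` and `r ≥ 2`; hence `j ≥ 1`. Clearing denominators
(with `m r = k + j`), the claim `j / r ≥ m / (μ - 1)` becomes `j (μ - 2) ≥ k`, which follows from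
`j ≥ 1` and `k ≤ μ - 2`.
-/

open MeasureTheory Real
open scoped ENNReal NNReal

/-- local gap below, b₀ - N ≥ (μ - N)/(μ - 1) where N = ⌊b₀⌋ ≥ 2. -/
theorem stmt_6 (μ r k : ℕ) (hadm : Admissible μ r k) (N : ℤ)
    (hN : N = ⌊(μ:ℝ) - (k:ℝ)/(r:ℝ)⌋) (hN2 : 2 ≤ N) :
    ((μ:ℝ) - (k:ℝ)/(r:ℝ)) - N ≥ ((μ:ℝ) - N) / ((μ:ℝ) - 1) := by
  obtain ⟨hμ, hr, -, hkμ, -, hkr⟩ := hadm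
  have hr0 : (0:ℝ) < r := by exact_mod_cast (by omega : 0 < r)
  have hμ3 : (3:ℝ) ≤ μ := by exact_mod_cast hμ
  have hkμ' : (k:ℝ) + 2 ≤ μ := by exact_mod_cast (by omega : k + 2 ≤ μ)
  have hle : (N:ℝ) ≤ (μ:ℝ) - (k:ℝ)/(r:ℝ) := hN ▸ Int.floor_le _
  have hj0 : (k:ℤ) ≤ ((μ:ℤ) - N) * r := by
    have h : (k:ℝ)/(r:ℝ) ≤ (μ:ℝ) - N := by linarith
    rw [div_le_iff₀ hr0] at h
    exact_mod_cast h
  have hne : (k:ℤ) ≠ ((μ:ℤ) - N) * r := by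
    intro h
    have hdvd : r ∣ k := Int.natCast_dvd_natCast.mp ⟨(μ:ℤ) - N, by rw [h, mul_comm]⟩
    have hr1 : r = 1 := by
      rw [← Nat.gcd_eq_right hdvd]
      exact hkr
    omega
  have hj1 : (k:ℝ) + 1 ≤ ((μ:ℝ) - N) * r := by
    exact_mod_cast Int.add_one_le_iff.mpr (lt_of_le_of_ne hj0 hne)
  have hrew : ((μ:ℝ) - (k:ℝ)/(r:ℝ)) - N = (((μ:ℝ) - N) * r - k) / r := by
    field_simp
    ring
  rw [hrew, ge_iff_le, div_le_div_iff₀ (by linarith) hr0]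
  -- The difference of the two sides is `(j - 1) (μ - 2) + (μ - 2 - k)`.
  nlinarith [mul_nonneg (sub_nonneg.mpr hj1) (by linarith : (0:ℝ) ≤ (μ:ℝ) - 2)]
end

section
/- Let (μ,r,k) be an admissible parameter triple, b₀ = μ − k/r, and let N = ⌊b₀⌋, assuming N ≥ 2. If μ ≥ N + 2, then (N + 1) − b₀ ≥ (μ − N − 1)/(μ − 3). -/
/-!
Put `j = μ - N - 1 ≥ 1`. The inequality `μ - k/r < N + 1` means `j r < k`, hence `j r + 1 ≤ k` by
integrality, so the gap `(N + 1) - b₀ = k/r - j` is at least `1/r`. On the other hand `k ≤ μ - 2`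
gives `j r ≤ μ - 3`, that is, `j / (μ - 3) ≤ 1/r`; here `μ ≥ N + 2 ≥ 4` makes `μ - 3` positive.
-/

open MeasureTheory Real
open scoped ENNReal NNReal

/-- local gap above, (N+1) - b₀ ≥ (μ - N - 1)/(μ - 3) when μ ≥ N + 2. -/
theorem stmt_7 (μ r k : ℕ) (hadm : Admissible μ r k) (N : ℤ)
    (hN : N = ⌊(μ:ℝ) - (k:ℝ)/(r:ℝ)⌋) (hN2 : 2 ≤ N) (hμN : (N:ℤ) + 2 ≤ μ) :
    ((N:ℝ) + 1) - ((μ:ℝ) - (k:ℝ)/(r:ℝ)) ≥ ((μ:ℝ) - N - 1) / ((μ:ℝ) - 3) := by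
  obtain ⟨-, hr, -, hk, -, -⟩ := hadm
  have hr0 : (0 : ℝ) < r := by exact_mod_cast (by omega : 0 < r)
  have hμ : (0 : ℝ) < (μ : ℝ) - 3 := by
    have h : (4 : ℤ) ≤ (μ : ℤ) := by omega
    have h' : (4 : ℝ) ≤ (μ : ℝ) := by exact_mod_cast h
    linarith
  have hlt : (μ : ℝ) - k / r < N + 1 := by
    rw [hN]
    exact Int.lt_floor_add_one _
  have hjr : ((μ : ℝ) - N - 1) * r < k := by
    rw [← lt_div_iff₀ hr0]
    linarith
  -- both sides are integers, so the strict inequality gains a full unit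
  have hjr1 : ((μ : ℤ) - N - 1) * r + 1 ≤ k := by
    have h : ((μ : ℤ) - N - 1) * r < k := by exact_mod_cast hjr
    omega
  have hjr1' : ((μ : ℝ) - N - 1) * r + 1 ≤ k := by exact_mod_cast hjr1
  have hk' : (k : ℝ) ≤ μ - 2 := by
    have h : (k : ℤ) ≤ (μ : ℤ) - 2 := by omega
    exact_mod_cast h
  have hgap : (μ : ℝ) - N - 1 + 1 / r ≤ k / r := by
    rw [le_div_iff₀ hr0, add_mul, one_div_mul_cancel hr0.ne']
    exact hjr1'
  have hfrac : ((μ : ℝ) - N - 1) / (μ - 3) ≤ 1 / r := by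
    rw [div_le_div_iff₀ hμ hr0]
    linarith
  linarith
end

section
/- Let (μ,r,k) be an admissible parameter triple, b₀ = μ − k/r, and let N = ⌊b₀⌋, assuming N ≥ 2. Then b₀ ∉ [N, N + 1/N); equivalently, b₀ − N ≥ 1/N. -/
/-!
Write `d = μ - N` and `b₀ - N = j / r` with `j = r d - k`. The floor gives `0 ≤ j < r`, and `j ≠ 0`
because `k` and `r ≥ 2` are coprime; hence `d ≥ 1`. The bound `k ≤ μ - 2` reads
`N ≥ (r - 1) d - j + 2 ≥ r - j + 1`, so `j N ≥ j (r - j + 1) = r + (j - 1) (r - j) ≥ r`,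
which is `j / r ≥ 1 / N`.
-/

open MeasureTheory Real
open scoped ENNReal NNReal

/-- gaps above integers, b₀ ∉ [N, N + 1/N), equivalently b₀ - N ≥ 1/N. -/
theorem stmt_8 (μ r k : ℕ) (hadm : Admissible μ r k) (N : ℤ)
    (hN : N = ⌊(μ:ℝ) - (k:ℝ)/(r:ℝ)⌋) (hN2 : 2 ≤ N) :
    ((μ:ℝ) - (k:ℝ)/(r:ℝ)) ∉ Set.Ico (N:ℝ) ((N:ℝ) + 1/(N:ℝ)) ∧
    ((μ:ℝ) - (k:ℝ)/(r:ℝ)) - N ≥ 1/(N:ℝ) := by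
  obtain ⟨hμ, hr, hk, hkμ, -, hkr⟩ := hadm
  have hr0 : (0:ℝ) < r := by exact_mod_cast (by omega : 0 < r)
  have hN0 : (0:ℝ) < N := by exact_mod_cast (by omega : 0 < N)
  obtain ⟨hle, hlt⟩ := Int.floor_eq_iff.mp hN.symm
  have hb : (μ:ℝ) - (k:ℝ)/(r:ℝ) - N = (r * (μ - N) - k) / r := by
    field_simp
    ring
  obtain ⟨j, hj⟩ : ∃ j : ℤ, j = r * (μ - N) - k := ⟨_, rfl⟩
  have hjR : (r:ℝ) * (μ - N) - k = (j:ℝ) := by rw [hj]; push_cast; ring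
  rw [hjR] at hb
  have hj0 : 0 ≤ j := by
    have h : (0:ℝ) ≤ j / r := by linarith
    have h2 : (0:ℝ) ≤ j := by simpa using (le_div_iff₀ hr0).mp h
    exact_mod_cast h2
  have hjr : j < r := by
    have h : (j:ℝ) / r < 1 := by linarith
    have h2 : (j:ℝ) < r := (div_lt_one hr0).mp h
    exact_mod_cast h2
  -- `j = 0` would make `r ≥ 2` divide `k`, against coprimality.
  have hj1 : j ≠ 0 := by
    rintro rfl
    have hd : (r:ℤ) ∣ k := ⟨μ - N, by linarith⟩
    have hd' : r ∣ k := by exact_mod_cast hd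
    have := Nat.gcd_eq_right hd'
    omega
  have hj1' : 1 ≤ j := by omega
  have hd1 : (1:ℤ) ≤ μ - N := by
    have hprod : (0:ℤ) < r * (μ - N) := by omega
    have := pos_of_mul_pos_right hprod (by omega)
    omega
  have hr1 : (2:ℤ) ≤ r := by exact_mod_cast hr
  have hkμ' : (k:ℤ) ≤ μ - 2 := by omega
  -- Substituting `k = r d - j` in `k ≤ μ - 2 = N + d - 2`, where `d = μ - N ≥ 1`.
  have hNlow : (r:ℤ) - j + 1 ≤ N := by
    nlinarith [mul_nonneg (by linarith : (0:ℤ) ≤ r - 1) (by linarith : (0:ℤ) ≤ μ - N - 1)]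
  have hmain : (r:ℤ) ≤ j * N := by
    nlinarith [mul_nonneg (by linarith : (0:ℤ) ≤ j - 1) (by linarith : (0:ℤ) ≤ r - j),
      mul_le_mul_of_nonneg_left hNlow hj0]
  have hmainR : (r:ℝ) ≤ j * N := by exact_mod_cast hmain
  have hgap : ((μ:ℝ) - (k:ℝ)/(r:ℝ)) - N ≥ 1/(N:ℝ) := by
    rw [hb, ge_iff_le, div_le_div_iff₀ hN0 hr0]
    linarith
  exact ⟨fun h => by linarith [h.2], hgap⟩
end

section
/- For every integer n ≥ 1, the sets satisfy P ⊆ H ⊆ T, where P is the point obstruction set, H is the hyperbolic obstruction set (depending on n), and T is the right half of the Janssen tie. -/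
/-!
The inclusion `P ⊆ H` holds because each point is the centre of its own segment.

For `H ⊆ T`, put `q = rμ` and `s = ab = 1 - k/q`. The two inequalities of the tie say
`⌈b⌉ - b ≤ s` and `b - ⌊b⌋ ≤ s`, so it is enough that `b` keeps distance at least `k/q` from every
integer (`Hseg_far_from_int`). Since `gcd(k, r) = 1` and `r ≥ 2`, the centre `b₀ = (rμ - k)/r` is a
non-integer multiple of `1/r`, hence at distance at least `1/r = μ/q` from every integer; moving
from `b₀` to `b` costs at most `(μ - k - 1)/q`, and `μ - (μ - k - 1) = k + 1 > k`. As `b₀ > 2`, the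
same gap around the integer `2` gives `b > 2`.
-/

open MeasureTheory Real
open scoped ENNReal NNReal

/-- The point obstruction set P. -/
def Pset : Set (ℝ × ℝ) :=
  {x | ∃ μ r k : ℕ, Admissible μ r k ∧ x = (1/(μ:ℝ), (μ:ℝ) - (k:ℝ)/(r:ℝ))}

/-- The hyperbolic obstruction segment H_{(a₀,b₀)} for B-spline order n and
admissible (μ,r,k), with p = rμ - k, q = rμ, b₀ = μ - k/r. -/
def Hseg (n μ r k : ℕ) : Set (ℝ × ℝ) :=
  {x | 0 < x.1 ∧ 0 < x.2 ∧ x.1 * x.2 = ((r:ℝ) * μ - k) / ((r:ℝ) * μ) ∧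
    |x.2 - ((μ:ℝ) - (k:ℝ)/(r:ℝ))| ≤ ((μ:ℝ) - k - 1) / ((n:ℝ) * ((r:ℝ) * μ))}

/-- The full hyperbolic obstruction set H (for B-spline order n). -/
def Hset (n : ℕ) : Set (ℝ × ℝ) :=
  ⋃ (μ : ℕ) (r : ℕ) (k : ℕ) (_ : Admissible μ r k), Hseg n μ r k

/-- The right half T of the Janssen tie. -/
def Tset : Set (ℝ × ℝ) :=
  {x | 0 < x.1 ∧ 0 < x.2 ∧ x.1 * x.2 < 1 ∧ 2 < x.2 ∧
    (⌈x.2⌉ : ℝ) / (1 + x.1) ≤ x.2 ∧ x.2 ≤ (⌊x.2⌋ : ℝ) / (1 - x.1)}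

/-- On a segment, `b` lies on the same side of every integer `m` as the centre `b₀ = (rμ - k)/r`,
and at distance more than `k/(rμ)` from `m`. -/
lemma Hseg_far_from_int {n μ r k : ℕ} (hn : 1 ≤ n) (h : Admissible μ r k) {x : ℝ × ℝ}
    (hx : x ∈ Hseg n μ r k) (m : ℤ) :
    ((r : ℤ) * m < r * μ - k ∧ (m : ℝ) + k / (r * μ) < x.2) ∨
      ((r : ℤ) * μ - k < r * m ∧ x.2 < m - k / (r * μ)) := by
  obtain ⟨hμ, hr, hk, hkμ, -, hkr⟩ := h
  obtain ⟨-, -, -, hb⟩ := hx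
  have hkμ' : k + 2 ≤ μ := by omega
  have hr0 : (0 : ℝ) < r := by exact_mod_cast (by omega : 0 < r)
  have hμ0 : (0 : ℝ) < μ := by exact_mod_cast (by omega : 0 < μ)
  have hn1 : (1 : ℝ) ≤ n := by exact_mod_cast hn
  have hkμR : (k : ℝ) + 2 ≤ μ := by exact_mod_cast hkμ'
  have hq : (0 : ℝ) < r * μ := by positivity
  have hb' : |x.2 - ((μ : ℝ) - k / r)| ≤ ((μ : ℝ) - k - 1) / (r * μ) := by
    refine hb.trans ?_
    apply div_le_div_of_nonneg_left (by linarith) hq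
    nlinarith
  rw [abs_le] at hb'
  have e1 : ((μ : ℝ) - k - 1) / (r * μ) = 1 / r - k / (r * μ) - 1 / (r * μ) := by
    field_simp
  have hpos : 0 < 1 / ((r : ℝ) * μ) := by positivity
  rw [e1] at hb'
  have hne : (r : ℤ) * m ≠ r * μ - k := by
    intro he
    have hd : (r : ℤ) ∣ k := ⟨μ - m, by linarith⟩
    have hd' : r ∣ k := by exact_mod_cast hd
    have : r ∣ Nat.gcd k r := Nat.dvd_gcd hd' dvd_rfl
    rw [hkr] at this
    have := Nat.le_of_dvd one_pos this
    omega
  rcases lt_or_gt_of_ne hne with hlt | hgt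
  · left
    refine ⟨hlt, ?_⟩
    have h1 : (r : ℝ) * m + 1 ≤ r * μ - k := by exact_mod_cast hlt
    have h2 : (m : ℝ) + 1 / r ≤ μ - k / r := by
      have : ((r : ℝ) * m + 1) / r ≤ (r * μ - k) / r := by gcongr
      rwa [add_div, sub_div, mul_div_cancel_left₀ _ hr0.ne', mul_div_cancel_left₀ _ hr0.ne'] at this
    linarith [hb'.1]
  · right
    refine ⟨hgt, ?_⟩
    have h1 : (r : ℝ) * μ - k + 1 ≤ r * m := by exact_mod_cast hgt
    have h2 : (μ : ℝ) - k / r + 1 / r ≤ m := by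
      have : ((r : ℝ) * μ - k + 1) / r ≤ (r * m) / r := by gcongr
      rwa [add_div, sub_div, mul_div_cancel_left₀ _ hr0.ne', mul_div_cancel_left₀ _ hr0.ne'] at this
    linarith [hb'.2]

lemma Hseg_subset_Tset {n μ r k : ℕ} (hn : 1 ≤ n) (h : Admissible μ r k) :
    Hseg n μ r k ⊆ Tset := by
  intro x hx
  have key := Hseg_far_from_int hn h hx
  obtain ⟨hμ, hr, hk, hkμ, -, -⟩ := h
  obtain ⟨ha, hb, hab, -⟩ := hx
  have hkμ' : k + 2 ≤ μ := by omega
  have hr0 : (0 : ℝ) < r := by exact_mod_cast (by omega : 0 < r)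
  have hμ0 : (0 : ℝ) < μ := by exact_mod_cast (by omega : 0 < μ)
  have hk0 : (0 : ℝ) < k := by exact_mod_cast hk
  have hq : (0 : ℝ) < r * μ := by positivity
  have hkq : 0 < (k : ℝ) / (r * μ) := by positivity
  rw [sub_div, div_self hq.ne'] at hab
  have hb2 : 2 < x.2 := by
    rcases key 2 with ⟨-, h2⟩ | ⟨h2, -⟩
    · push_cast at h2
      linarith
    · -- `b₀ > 2`, since `r (μ - 2) ≥ 2 (μ - 2) ≥ 2k > k`.
      exfalso
      zify at hkμ' hr hμ hk
      nlinarith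
  have hab1 : x.1 * x.2 < 1 := by linarith
  have ha1 : x.1 < 1 := by nlinarith
  refine ⟨ha, hb, hab1, hb2, ?_, ?_⟩
  · rw [div_le_iff₀ (by linarith)]
    have hc := Int.ceil_lt_add_one x.2
    -- `⌈b⌉ - 1 < b`, so `b` is to the right of the gap around `⌈b⌉ - 1`.
    rcases key (⌈x.2⌉ - 1) with ⟨-, h2⟩ | ⟨-, h2⟩ <;> push_cast at h2 <;> nlinarith
  · rw [le_div_iff₀ (by linarith)]
    have hf := Int.lt_floor_add_one x.2
    -- `b < ⌊b⌋ + 1`, so `b` is to the left of the gap around `⌊b⌋ + 1`.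
    rcases key (⌊x.2⌋ + 1) with ⟨-, h2⟩ | ⟨-, h2⟩ <;> push_cast at h2 <;> nlinarith

/-- P ⊆ H ⊆ T. -/
theorem stmt_9 (n : ℕ) (hn : 1 ≤ n) : Pset ⊆ Hset n ∧ Hset n ⊆ Tset := by
  constructor
  · rintro x ⟨μ, r, k, h, rfl⟩
    simp only [Hset, Set.mem_iUnion]
    refine ⟨μ, r, k, h, ?_⟩
    obtain ⟨hμ, hr, hk, hkμ, -, -⟩ := h
    have hkμ' : k + 2 ≤ μ := by omega
    have hr1 : (1 : ℝ) ≤ r := by exact_mod_cast (by omega : 1 ≤ r)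
    have hμ0 : (0 : ℝ) < μ := by exact_mod_cast (by omega : 0 < μ)
    have hr0 : (0 : ℝ) < r := by linarith
    have hkμR : (k : ℝ) + 2 ≤ μ := by exact_mod_cast hkμ'
    refine ⟨by positivity, ?_, ?_, ?_⟩
    · have : (k : ℝ) / r ≤ k := div_le_self (by positivity) hr1
      simp only
      linarith
    · simp only
      field_simp
    · simp only [sub_self, abs_zero]
      exact div_nonneg (by linarith) (by positivity)
  · intro x hx
    simp only [Hset, Set.mem_iUnion] at hx
    obtain ⟨μ, r, k, h, hx⟩ := hx
    exact Hseg_subset_Tset hn h hx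
end

section
/- Let n ≥ 1 be an integer, let (μ,r,k) be admissible parameters, and set a₀ = 1/μ, b₀ = μ − k/r, N = ⌊b₀⌋. Then (1/(nr))·(1 − (k+1)/μ) ≤ b₀(1 + a₀) − (N + 1). -/
/-!
Since `b₀ · a₀ = 1 - k/(rμ)`, the right-hand side equals `(b₀ - N) - k/(rμ)`. The number `b₀` is a
fraction with denominator `r`, and it is not an integer because `k` is coprime to `r ≥ 2`; hence
`b₀ - N ≥ 1/r`, and the right-hand side is at least `(1/r)(1 - k/μ)`. This dominates the left-hand
side, as `1 - (k+1)/μ ≥ 0` and `n ≥ 1`.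
-/

open MeasureTheory Real
open scoped ENNReal NNReal

/-- The fractional part of `μ - k/r` is at least `1/r`, with the denominator `r` cleared. -/
theorem floor_mul_add_one_le {μ r k : ℕ} (hr : 2 ≤ r) (hkr : Nat.gcd k r = 1) :
    ⌊(μ:ℝ) - (k:ℝ)/(r:ℝ)⌋ * (r:ℤ) + 1 ≤ (μ:ℤ) * r - k := by
  have hr0 : (0:ℝ) < r := by exact_mod_cast (by omega : 0 < r)
  have hfloor := Int.floor_le ((μ:ℝ) - (k:ℝ)/(r:ℝ))
  generalize ⌊(μ:ℝ) - (k:ℝ)/(r:ℝ)⌋ = N at hfloor ⊢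
  have hreal : (N:ℝ) * r ≤ (μ:ℝ) * r - k := by
    have h := mul_le_mul_of_nonneg_right hfloor hr0.le
    rwa [sub_mul, div_mul_cancel₀ _ hr0.ne'] at h
  have hle : N * (r:ℤ) ≤ (μ:ℤ) * r - k := by exact_mod_cast hreal
  -- Equality would force `r ∣ k`, contradicting coprimality.
  have hne : N * (r:ℤ) ≠ (μ:ℤ) * r - k := by
    intro h
    have hdvd : (r:ℤ) ∣ (k:ℤ) := ⟨(μ:ℤ) - N, by linarith⟩
    have hone : r ∣ 1 := hkr ▸ Nat.dvd_gcd (Int.natCast_dvd_natCast.mp hdvd) dvd_rfl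
    have := Nat.le_of_dvd one_pos hone
    omega
  omega

/-- lower boundary check, (1/(nr))(1 - (k+1)/μ) ≤ b₀(1 + a₀) - (N + 1). -/
theorem stmt_10 (n μ r k : ℕ) (hn : 1 ≤ n) (hadm : Admissible μ r k) (N : ℤ)
    (hN : N = ⌊(μ:ℝ) - (k:ℝ)/(r:ℝ)⌋) :
    (1 / ((n:ℝ) * r)) * (1 - ((k:ℝ) + 1)/(μ:ℝ)) ≤
      ((μ:ℝ) - (k:ℝ)/(r:ℝ)) * (1 + 1/(μ:ℝ)) - ((N:ℝ) + 1) := by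
  obtain ⟨hμ, hr, -, hkμ, -, hkr⟩ := hadm
  have hkey : (N:ℝ) * r + 1 ≤ (μ:ℝ) * r - k := by
    have h := floor_mul_add_one_le (μ := μ) hr hkr
    rw [← hN] at h
    exact_mod_cast h
  have hμ0 : (0:ℝ) < μ := by exact_mod_cast (by omega : 0 < μ)
  have hr0 : (0:ℝ) < r := by exact_mod_cast (by omega : 0 < r)
  have hn1 : (1:ℝ) ≤ n := by exact_mod_cast hn
  have hk1 : (k:ℝ) + 1 ≤ μ := by exact_mod_cast (by omega : k + 1 ≤ μ)
  have hnonneg : 0 ≤ 1 - ((k:ℝ) + 1)/(μ:ℝ) := sub_nonneg.mpr ((div_le_one hμ0).mpr hk1)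
  calc (1 / ((n:ℝ) * r)) * (1 - ((k:ℝ) + 1)/(μ:ℝ))
      ≤ (1 / (r:ℝ)) * (1 - ((k:ℝ) + 1)/(μ:ℝ)) := by
        refine mul_le_mul_of_nonneg_right ?_ hnonneg
        exact one_div_le_one_div_of_le hr0 (le_mul_of_one_le_left hr0.le hn1)
    _ ≤ (1 / (r:ℝ)) * (1 - (k:ℝ)/(μ:ℝ)) := by
        gcongr
        linarith
    _ ≤ (1 / (r:ℝ)) * (((μ:ℝ) * r - k - N * r) - (k:ℝ)/(μ:ℝ)) := by
        gcongr
        linarith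
    _ = ((μ:ℝ) - (k:ℝ)/(r:ℝ)) * (1 + 1/(μ:ℝ)) - ((N:ℝ) + 1) := by
        field_simp
        ring
end

section
/- Every point of P is an isolated point of P: for each (a₀,b₀) ∈ P there exists ε > 0 such that no point of P other than (a₀,b₀) lies within Euclidean distance ε of (a₀,b₀). -/
/-!
Fix the point with parameters `(μ, r, k)`. Points of `P` with another first parameter `m` differ
in the first coordinate by `|1/m - 1/μ| ≥ 1/(μ(μ+1))`. Points with the same first parameter differ
in the second coordinate by `|k/r - l/s|`, where `l ≤ μ`: for `s ≥ 2rμ` the fraction `l/s` is at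
most `1/(2r)`, half the least possible value of `k/r`, and for `s < 2rμ` two distinct fractions
with denominators `r` and `s` differ by at least `1/(rs) ≥ 1/(2r²μ)`. So the radius
`1/(2r²μ(μ+1))` works in all cases.
-/

open MeasureTheory Real
open scoped ENNReal NNReal

lemma one_div_nat_gap (m n : ℕ) (hm : 1 ≤ m) (hn : 1 ≤ n) (h : m ≠ n) :
    1 / ((n : ℝ) * (n + 1)) ≤ |1 / (m : ℝ) - 1 / (n : ℝ)| := by
  have hm' : (1 : ℝ) ≤ m := by exact_mod_cast hm
  have hn' : (1 : ℝ) ≤ n := by exact_mod_cast hn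
  have hm0 : (0 : ℝ) < m := by linarith
  have hn0 : (0 : ℝ) < n := by linarith
  have e : 1 / (m : ℝ) - 1 / (n : ℝ) = (n - m) / (m * n) := by field_simp
  rw [e, abs_div, abs_of_pos (mul_pos hm0 hn0), div_le_div_iff₀ (by positivity) (by positivity)]
  rcases lt_or_gt_of_ne h with h | h
  · have h' : (m : ℝ) + 1 ≤ n := by exact_mod_cast h
    rw [abs_of_nonneg (by linarith)]
    nlinarith [mul_pos hn0 hn0, mul_pos hm0 hn0,
      mul_nonneg (mul_pos hn0 hn0).le (by linarith : (0 : ℝ) ≤ n - m - 1)]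
  · have h' : (n : ℝ) + 1 ≤ m := by exact_mod_cast h
    rw [abs_of_nonpos (by linarith)]
    -- the difference of the two sides is `n² (m - n - 1)`
    nlinarith [mul_nonneg (mul_pos hn0 hn0).le (by linarith : (0 : ℝ) ≤ m - n - 1)]

/-- Fractions with numerators bounded by `M` accumulate only at `0`: a positive fraction `k / r`
is at distance at least `1 / (2 r² M)` from every other one. -/
lemma bounded_numerator_gap (M r k s l : ℕ) (hM : 1 ≤ M) (hr : 1 ≤ r) (hk : 1 ≤ k)
    (hs : 1 ≤ s) (hl : l ≤ M) (h : (k : ℝ) / r ≠ (l : ℝ) / s) :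
    1 / (2 * (r : ℝ) ^ 2 * M) ≤ |(k : ℝ) / r - (l : ℝ) / s| := by
  have hM' : (1 : ℝ) ≤ M := by exact_mod_cast hM
  have hr' : (1 : ℝ) ≤ r := by exact_mod_cast hr
  have hk' : (1 : ℝ) ≤ k := by exact_mod_cast hk
  have hs' : (1 : ℝ) ≤ s := by exact_mod_cast hs
  have hl' : (l : ℝ) ≤ M := by exact_mod_cast hl
  have hr0 : (0 : ℝ) < r := by linarith
  have hs0 : (0 : ℝ) < s := by linarith
  have hM0 : (0 : ℝ) < M := by linarith
  rcases le_total (2 * (r : ℝ) * M) s with hc | hc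
  · have h1 : (l : ℝ) / s ≤ 1 / (2 * r) := by
      rw [div_le_div_iff₀ hs0 (by positivity)]
      nlinarith
    have h2 : 1 / (r : ℝ) ≤ k / r := by gcongr
    have h3 : 1 / (r : ℝ) = 1 / (2 * r) + 1 / (2 * r) := by field_simp; norm_num
    have h4 : 1 / (2 * (r : ℝ) ^ 2 * M) ≤ 1 / (2 * r) := by
      apply one_div_le_one_div_of_le (by positivity)
      nlinarith [mul_le_mul hr' hM' zero_le_one hr0.le]
    exact le_trans (by linarith) (le_abs_self _)
  · have e : (k : ℝ) / r - (l : ℝ) / s = ((k * s - r * l : ℤ) : ℝ) / (r * s) := by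
      push_cast
      field_simp
    have hne : (k * s - r * l : ℤ) ≠ 0 := by
      intro h0
      rw [h0] at e
      simp at e
      exact h (by linarith)
    have h1 : (1 : ℝ) ≤ |((k * s - r * l : ℤ) : ℝ)| := by
      exact_mod_cast Int.one_le_abs hne
    rw [e, abs_div, abs_of_pos (mul_pos hr0 hs0)]
    apply div_le_div₀ (abs_nonneg _) h1 (by positivity)
    nlinarith

/-- every point of P is isolated in P (Euclidean distance in ℝ²). -/
theorem stmt_13 (x : ℝ × ℝ) (hx : x ∈ Pset) :
    ∃ ε > 0, ∀ y ∈ Pset, y ≠ x →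
      ε ≤ Real.sqrt ((y.1 - x.1)^2 + (y.2 - x.2)^2) := by
  obtain ⟨μ, r, k, ⟨hμ, hr, hk, -, -, -⟩, rfl⟩ := hx
  have hμ' : (3 : ℝ) ≤ μ := by exact_mod_cast hμ
  have hr' : (2 : ℝ) ≤ r := by exact_mod_cast hr
  have hμ0 : (0 : ℝ) < μ := by linarith
  have hr0 : (0 : ℝ) < r := by linarith
  refine ⟨1 / (2 * (r : ℝ) ^ 2 * (μ * (μ + 1))), by positivity, ?_⟩
  rintro _ ⟨m, s, l, ⟨hm, hs, -, hl, -, -⟩, rfl⟩ hne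
  by_cases h : m = μ
  · subst h
    have hne' : (k : ℝ) / r ≠ (l : ℝ) / s := by
      intro h0
      exact hne (by rw [h0])
    have key := bounded_numerator_gap m r k s l (by omega) (by omega) hk (by omega) (by omega) hne'
    calc 1 / (2 * (r : ℝ) ^ 2 * (m * (m + 1))) ≤ 1 / (2 * (r : ℝ) ^ 2 * m) := by
          apply one_div_le_one_div_of_le (by positivity)
          gcongr
          nlinarith
      _ ≤ |(k : ℝ) / r - (l : ℝ) / s| := key
      _ ≤ _ := by
          apply Real.abs_le_sqrt
          dsimp only
          nlinarith
  · have key := one_div_nat_gap m μ (by omega) (by omega) h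
    calc 1 / (2 * (r : ℝ) ^ 2 * (μ * (μ + 1))) ≤ 1 / ((μ : ℝ) * (μ + 1)) := by
          apply one_div_le_one_div_of_le (by positivity)
          apply le_mul_of_one_le_left (by positivity)
          nlinarith
      _ ≤ |1 / (m : ℝ) - 1 / (μ : ℝ)| := key
      _ ≤ _ := by
          apply Real.abs_le_sqrt
          dsimp only
          exact le_add_of_nonneg_right (sq_nonneg _)
end
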